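/- For every n ≥ 1, the number of distinct families ℱ of subsets of [n] that are feasible families of Schubert delta matroids on [n] which are both loopless and coloopless equals the number of signed derangements of [n], i.e., the number of pairs (σ, N) of a permutation σ of [n] and a subset N ⊆ [n] such that every fixed point of σ belongs to N. -/

import Mathlib

/-!
Reading `[n]` from the top, `S` becomes a word in zeros and ones, and `T ⪯ S` bounds the number of
elements of `T` in every initial segment of this reading. If the word starts with a one, only the
bounds at the ends of the runs of zeros matter. The order ideal of `S`, transported by `σ`, is
thus described by disjoint blocks `B₁, …, Bₖ` with increments `0 < rᵢ < |Bᵢ|`: it consists of the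
sets meeting `B₁ ∪ ⋯ ∪ Bᵢ` in at most `r₁ + ⋯ + rᵢ` elements for each `i`. Elements outside the
blocks are free. A family is loopless and coloopless exactly when the top element of `[n]` lies in
`S`, so such families are the twists of these complexes by sets `N` (`families_eq`).

The description is unique once `N` is required to be a subset of the union of the blocks
(`fam_injective`). The twist is unique because the cone points of the complex are the free elements;
the blocks are unique because the minimum-size non-faces are the `(r₁ + 1)`-subsets of `B₁`, and
the remaining blocks are recovered by contracting `B₁`.

Splitting off the first block shows that the number `f n` of families satisfies
`f n = 1 + ∑ j, (n choose j) (j - 1) 2 ^ j f (n - j)` (`sum_codes`). The number of signed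
derangements satisfies the same recursion, because its exponential generating function
is `exp (-x) / (1 - 2 x)` (`sd_rec`).
-/

open Finset

/-- The type `B` Gale order on subsets of `[n]`:
`A ⪯ B` iff for every `c`, `|{x ∈ A : x ≥ c}| ≤ |{x ∈ B : x ≥ c}|`. -/
def galeB {n : ℕ} (A B : Finset (Fin n)) : Prop :=
  ∀ c : Fin n, (A.filter fun x => c ≤ x).card ≤ (B.filter fun x => c ≤ x).card

/-- `ℱ` is the feasible family of a Schubert delta matroid on `[n]`: there are a subset
`S`, a permutation `σ` and a subset `N` such that `ℱ = {σ(T Δ N) : T ⪯ S}`. -/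
def IsSchubertDeltaFamily {n : ℕ} (ℱ : Set (Finset (Fin n))) : Prop :=
  ∃ (S : Finset (Fin n)) (σ : Equiv.Perm (Fin n)) (N : Finset (Fin n)),
    ℱ = (fun T : Finset (Fin n) => ((T \ N) ∪ (N \ T)).image σ) '' {T | galeB T S}

/-- A family of subsets of `[n]` is loopless if every `i ∈ [n]` lies in some member. -/
def FamLoopless {n : ℕ} (ℱ : Set (Finset (Fin n))) : Prop :=
  ∀ i : Fin n, ∃ B ∈ ℱ, i ∈ B

/-- A family of subsets of `[n]` is coloopless if every `i ∈ [n]` is omitted by some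
member. -/
def FamColoopless {n : ℕ} (ℱ : Set (Finset (Fin n))) : Prop :=
  ∀ i : Fin n, ∃ B ∈ ℱ, i ∉ B

namespace SchubertDelta

/-! ### Codes: blocks with increments, and the simplicial complexes they cut out -/

section Codes

variable {α : Type*} [DecidableEq α]

/-- A code is a list of blocks `(B₁, r₁), (B₂, r₂), …`, each an element set with a rank increment.
`Mem L s T` says that `T` meets the partial unions of the blocks in at most
`s + r₁`, `s + r₁ + r₂`, … elements. The parameter `s` is the slack inherited from earlier blocks;
the truncated subtraction never truncates, because of the first conjunct. Elements outside
all blocks are unconstrained. -/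
def Mem : List (Finset α × ℕ) → ℕ → Finset α → Prop
  | [], _, _ => True
  | (B, r) :: L, s, T => #(T ∩ B) ≤ s + r ∧ Mem L (s + r - #(T ∩ B)) T

/-- `L` is a normalised code on the ground set `V`: the blocks are disjoint subsets of `V`, and every
increment lies strictly between `0` and the size of its block. -/
def Good : List (Finset α × ℕ) → Finset α → Prop
  | [], _ => True
  | (B, r) :: L, V => B ⊆ V ∧ 0 < r ∧ r < #B ∧ Good L (V \ B)

/-- The union of the blocks of a code, that is, the set of constrained elements. -/
def supp : List (Finset α × ℕ) → Finset α
  | [] => ∅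
  | (B, _) :: L => B ∪ supp L

lemma supp_subset {L : List (Finset α × ℕ)} {V : Finset α} (h : Good L V) : supp L ⊆ V := by
  induction L generalizing V with
  | nil => simp [supp]
  | cons p L ih =>
    obtain ⟨B, r⟩ := p
    exact union_subset h.1 ((ih h.2.2.2).trans sdiff_subset)

lemma mem_congr {L : List (Finset α × ℕ)} {s : ℕ} {T T' : Finset α}
    (h : ∀ x ∈ supp L, x ∈ T ↔ x ∈ T') : Mem L s T ↔ Mem L s T' := by
  induction L generalizing s with
  | nil => simp [Mem]
  | cons p L ih =>
    obtain ⟨B, r⟩ := p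
    have hB : T ∩ B = T' ∩ B := by
      ext x
      have := h x
      simp only [supp, mem_union, mem_inter] at *
      tauto
    have := ih (s := s + r - #(T' ∩ B)) fun x hx => h x (mem_union_right _ hx)
    simp only [Mem, hB, this]

lemma mem_mono {L : List (Finset α × ℕ)} {s s' : ℕ} {T T' : Finset α}
    (hs : s ≤ s') (hT : T' ⊆ T) (h : Mem L s T) : Mem L s' T' := by
  induction L generalizing s s' with
  | nil => trivial
  | cons p L ih =>
    obtain ⟨B, r⟩ := p
    have hB : #(T' ∩ B) ≤ #(T ∩ B) := card_le_card (inter_subset_inter_right hT)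
    have h1 := h.1
    exact ⟨by omega, ih (by omega) h.2⟩

/-- The first increment of a normalised code is positive, so even `s + 1` elements are allowed when
the inherited slack is `s`. In particular `∅` and all singletons are faces for `s = 0`. -/
lemma mem_of_card_le {L : List (Finset α × ℕ)} {V : Finset α} (hL : Good L V) {s : ℕ}
    {T : Finset α} (h : #(T ∩ V) ≤ s + 1) : Mem L s T := by
  induction L generalizing s V with
  | nil => trivial
  | cons p L ih =>
    obtain ⟨B, r⟩ := p
    obtain ⟨hB, hr, -, hL⟩ := hL
    have h1 : #(T ∩ V) = #(T ∩ B) + #(T ∩ (V \ B)) := by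
      rw [← card_union_of_disjoint, ← inter_union_distrib_left, union_sdiff_of_subset hB]
      exact disjoint_sdiff.mono inter_subset_right inter_subset_right
    exact ⟨by omega, ih hL (by omega)⟩

/-- Filling the first block with exactly `r` elements uses up its increment, so the faces of
`(B, r) :: L` determine those of `L`. -/
lemma mem_cons_union {B A : Finset α} {r s : ℕ} {L : List (Finset α × ℕ)} {V : Finset α}
    (hL : Good ((B, r) :: L) V) (hA : A ⊆ B) (hr : #A = r) (T : Finset α) :
    Mem ((B, r) :: L) s (T \ B ∪ A) ↔ Mem L s T := by
  have h1 : (T \ B ∪ A) ∩ B = A := by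
    ext x
    have := @hA x
    simp only [mem_union, mem_sdiff, mem_inter]
    tauto
  simp only [Mem, h1, hr, le_add_iff_nonneg_left, zero_le, true_and, add_tsub_cancel_right]
  refine mem_congr fun x hx => ?_
  have := supp_subset hL.2.2.2 hx
  have := @hA x
  simp only [mem_union, mem_sdiff] at *
  tauto

lemma mem_of_card_le_rank {B : Finset α} {r : ℕ} {L : List (Finset α × ℕ)} {V : Finset α}
    (hL : Good ((B, r) :: L) V) {T : Finset α} (hT : #T ≤ r) :
    Mem ((B, r) :: L) 0 T := by
  have h2 : #(T ∩ (V \ B)) ≤ #(T \ B) := card_le_card fun x => by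
    simp only [mem_inter, mem_sdiff]; tauto
  have := card_sdiff_add_card_inter T B
  exact ⟨by omega, mem_of_card_le hL.2.2.2 (by omega)⟩

/-- No constrained element is a cone point of the complex of faces. -/
lemma exists_not_cone {L : List (Finset α × ℕ)} {V : Finset α} (hL : Good L V) {x : α}
    (hx : x ∈ supp L) : ∃ T, Mem L 0 T ∧ ¬ Mem L 0 (insert x T) := by
  induction L generalizing V with
  | nil => simp [supp] at hx
  | cons p L ih =>
    obtain ⟨B, r⟩ := p
    have hL' := hL
    obtain ⟨hB, hr, hrB, hG⟩ := hL
    by_cases hxB : x ∈ B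
    · obtain ⟨A, hA, hAr⟩ := exists_subset_card_eq (s := B.erase x) (n := r)
        (by rw [card_erase_of_mem hxB]; omega)
      refine ⟨A, mem_of_card_le_rank hL' hAr.le, fun h => ?_⟩
      · have h1 := h.1
        have hxA : x ∉ A := fun h => by simpa using hA h
        rw [inter_eq_left.2, card_insert_of_notMem hxA] at h1
        · omega
        · exact insert_subset hxB (hA.trans (erase_subset _ _))
    · obtain ⟨T, h1, h2⟩ := ih hG (by simpa [supp, hxB] using hx)
      obtain ⟨A, hA, hAr⟩ := exists_subset_card_eq (s := B) (n := r) hrB.le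
      refine ⟨T \ B ∪ A, (mem_cons_union hL' hA hAr T).2 h1, fun h => h2 ?_⟩
      rw [← mem_cons_union hL' hA hAr]
      rwa [insert_sdiff_of_notMem _ hxB, insert_union]

/-- The non-faces of size `r + 1` are exactly the `(r + 1)`-subsets of the first block. -/
lemma mem_iff_of_card_eq {B : Finset α} {r : ℕ} {L : List (Finset α × ℕ)} {V : Finset α}
    (hL : Good ((B, r) :: L) V) {T : Finset α} (hT : #T = r + 1) :
    Mem ((B, r) :: L) 0 T ↔ ¬ T ⊆ B := by
  constructor
  · intro h hTB
    have := h.1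
    rw [inter_eq_left.2 hTB] at this
    omega
  · intro h
    have h1 : #(T ∩ B) < #T := card_lt_card ⟨inter_subset_left, fun h' =>
      h (h'.trans inter_subset_right)⟩
    refine ⟨by omega, mem_of_card_le hL.2.2.2 ?_⟩
    have h2 : #(T ∩ (V \ B)) ≤ #(T \ B) := card_le_card fun x => by
      simp only [mem_inter, mem_sdiff]; tauto
    have := card_sdiff_add_card_inter T B
    omega

lemma block_le {B B' : Finset α} {r r' : ℕ} {L L' : List (Finset α × ℕ)} {V : Finset α}
    (hL : Good ((B, r) :: L) V) (hL' : Good ((B', r') :: L') V)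
    (h : ∀ T, Mem ((B, r) :: L) 0 T ↔ Mem ((B', r') :: L') 0 T) :
    r' ≤ r ∧ (r = r' → B ⊆ B') := by
  have hrB := hL.2.2.1
  refine ⟨?_, ?_⟩
  · by_contra! hr
    obtain ⟨A, hA, hAr⟩ := exists_subset_card_eq (s := B) (n := r + 1) hrB
    exact (mem_iff_of_card_eq hL hAr).1 ((h A).2 (mem_of_card_le_rank hL' (by omega))) hA
  · rintro rfl x hx
    obtain ⟨A, hxA, hA, hAr⟩ := exists_subsuperset_card_eq (s := {x}) (t := B) (n := r + 1)
      (by simpa using hx) (by simp) hrB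
    by_contra hxB
    refine (mem_iff_of_card_eq hL hAr).1 ((h A).2 ((mem_iff_of_card_eq hL' hAr).2 ?_)) hA
    exact fun h => hxB (h (hxA (by simp)))

/-- A normalised code is determined by its faces: the smallest non-faces have size `r + 1`, where `r`
is the first increment, and their union is the first block. -/
lemma code_injective {L L' : List (Finset α × ℕ)} {V : Finset α} (hL : Good L V)
    (hL' : Good L' V) (h : ∀ T, Mem L 0 T ↔ Mem L' 0 T) : L = L' := by
  induction L generalizing L' V with
  | nil =>
    cases L' with
    | nil => rfl
    | cons p L' =>
      obtain ⟨B, r⟩ := p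
      have h1 := ((h B).1 trivial).1
      have := hL'.2.2.1
      rw [inter_self] at h1
      omega
  | cons p L ih =>
    obtain ⟨B, r⟩ := p
    cases L' with
    | nil =>
      have h1 := ((h B).2 trivial).1
      have := hL.2.2.1
      rw [inter_self] at h1
      omega
    | cons p' L' =>
      obtain ⟨B', r'⟩ := p'
      obtain ⟨h1, h2⟩ := block_le hL hL' h
      obtain ⟨h3, h4⟩ := block_le hL' hL fun T => (h T).symm
      obtain rfl : r = r' := le_antisymm h3 h1
      obtain rfl : B = B' := (h2 rfl).antisymm (h4 rfl)
      obtain ⟨A, hA, hAr⟩ := exists_subset_card_eq (s := B) (n := r) hL.2.2.1.le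
      rw [ih hL.2.2.2 hL'.2.2.2 fun T => by
        rw [← mem_cons_union hL hA hAr, h, mem_cons_union hL' hA hAr]]

/-- The faces of the code `L`, each changed by symmetric difference with `N`. -/
def fam (L : List (Finset α × ℕ)) (N : Finset α) : Set (Finset α) :=
  {U | Mem L 0 (symmDiff U N)}

/-- If twisting by `M` turns one complex of faces into another, then both being closed under subsets
forces the first to be closed under adjoining `M`. -/
lemma union_mem {L L' : List (Finset α × ℕ)} {M : Finset α}
    (h : ∀ T, Mem L 0 T ↔ Mem L' 0 (symmDiff T M)) {T : Finset α} (hT : Mem L 0 T) :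
    Mem L 0 (T ∪ M) := by
  have e : symmDiff (T \ M) M = T ∪ M := by
    ext x; simp only [mem_symmDiff, mem_union, mem_sdiff]; tauto
  have e' : symmDiff (T ∪ M) M = T \ M := by
    ext x; simp only [mem_symmDiff, mem_union, mem_sdiff]; tauto
  have h1 : Mem L' 0 (T ∪ M) := e ▸ (h _).1 (mem_mono le_rfl sdiff_subset hT)
  rw [h, e']
  exact mem_mono le_rfl (sdiff_subset.trans subset_union_left) h1

lemma disjoint_supp {L L' : List (Finset α × ℕ)} {M V : Finset α} (hL : Good L V)
    (h : ∀ T, Mem L 0 T ↔ Mem L' 0 (symmDiff T M)) : ∀ x ∈ M, x ∉ supp L := by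
  intro x hx hxL
  obtain ⟨T, h1, h2⟩ := exists_not_cone hL hxL
  exact h2 (mem_mono le_rfl (insert_subset (mem_union_right _ hx) subset_union_left)
    (union_mem h h1))

/-- Code and twist are both determined by the family, provided the twist is supported on the
constrained elements. -/
lemma fam_injective {L L' : List (Finset α × ℕ)} {N N' V : Finset α} (hL : Good L V)
    (hL' : Good L' V) (hN : N ⊆ supp L) (hN' : N' ⊆ supp L') (h : fam L N = fam L' N') :
    L = L' ∧ N = N' := by
  have h1 : ∀ T, Mem L 0 T ↔ Mem L' 0 (symmDiff T (symmDiff N N')) := fun T => by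
    have := Set.ext_iff.1 h (symmDiff T N)
    simp only [fam, Set.mem_ofPred_eq, symmDiff_symmDiff_cancel_right] at this
    rwa [symmDiff_assoc] at this
  have h2 : ∀ T, Mem L' 0 T ↔ Mem L 0 (symmDiff T (symmDiff N N')) := fun T => by
    rw [h1, symmDiff_symmDiff_cancel_right]
  have d1 := disjoint_supp hL h1
  have d2 := disjoint_supp hL' h2
  obtain rfl : L = L' := code_injective hL hL' fun T => by
    rw [h1]
    refine mem_congr fun x hx => ?_
    have := d2 x
    rw [mem_symmDiff]
    tauto
  refine ⟨rfl, ?_⟩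
  ext x
  have := d1 x
  have := @hN x
  have := @hN' x
  simp only [mem_symmDiff] at *
  tauto

/-- Two consecutive blocks can be merged if the constraint at the end of the first one is vacuous
(`r = #B`) or implied by the one at the end of the second (`r' = 0`). -/
lemma mem_merge {B B' : Finset α} {r r' : ℕ} {L : List (Finset α × ℕ)}
    (hd : Disjoint B B') (h : r = #B ∨ r' = 0) (s : ℕ) (T : Finset α) :
    Mem ((B, r) :: (B', r') :: L) s T ↔ Mem ((B ∪ B', r + r') :: L) s T := by
  have h1 : #(T ∩ (B ∪ B')) = #(T ∩ B) + #(T ∩ B') := by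
    rw [← card_union_of_disjoint, ← inter_union_distrib_left]
    exact hd.mono inter_subset_right inter_subset_right
  have h2 : #(T ∩ B) ≤ #B := card_le_card inter_subset_right
  simp only [Mem, h1, ← and_assoc]
  have h3 : (#(T ∩ B) ≤ s + r ∧ #(T ∩ B') ≤ s + r - #(T ∩ B) + r') ↔
      #(T ∩ B) + #(T ∩ B') ≤ s + (r + r') := by omega
  rw [h3]
  refine and_congr_right fun h4 => ?_
  have : s + r - #(T ∩ B) + r' - #(T ∩ B') = s + (r + r') - (#(T ∩ B) + #(T ∩ B')) := by omega
  rw [this]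

/-- The code with singleton blocks attached to a word in elements marked by bits, a bit being the
increment of its block. -/
def word (w : List (α × Bool)) : List (Finset α × ℕ) :=
  w.map fun p => ({p.1}, p.2.toNat)

/-- A word preceded by one block of positive increment can be brought into normal form. Zeros are
absorbed into the current block; a one is absorbed if the block has seen only ones, and
otherwise opens a new block. A final block with `r = #B` imposes no constraint and is dropped. -/
lemma exists_code (w : List (α × Bool)) (B V : Finset α) (r : ℕ) (hB : B ⊆ V) (hr : 0 < r)
    (hrB : r ≤ #B) (hw : (w.map Prod.fst).Nodup) (hwV : ∀ p ∈ w, p.1 ∈ V)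
    (hwB : ∀ p ∈ w, p.1 ∉ B) :
    ∃ L, Good L V ∧ ∀ s T, Mem ((B, r) :: word w) s T ↔ Mem L s T := by
  induction w generalizing B V r with
  | nil =>
    rcases hrB.lt_or_eq with h | h
    · exact ⟨[(B, r)], ⟨hB, hr, h, trivial⟩, fun s T => Iff.rfl⟩
    · refine ⟨[], trivial, fun s T => ⟨fun _ => trivial, fun _ => ⟨?_, trivial⟩⟩⟩
      have : #(T ∩ B) ≤ #B := card_le_card inter_subset_right
      omega
  | cons p w ih =>
    obtain ⟨x, b⟩ := p
    simp only [List.map_cons, List.nodup_cons, List.mem_map, not_exists, not_and] at hw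
    simp only [List.mem_cons, forall_eq_or_imp] at hwV hwB
    have hd : Disjoint B {x} := by simpa using hwB.1
    by_cases hc : r = #B ∨ b.toNat = 0
    · obtain ⟨L, hL, h⟩ := ih (B ∪ {x}) V (r + b.toNat)
        (union_subset hB (by simpa using hwV.1)) (by omega)
        (by rw [card_union_of_disjoint hd, card_singleton]; have := b.toNat_le; omega)
        hw.2 hwV.2 (fun p hp => by
          have := hw.1 p hp
          have := hwB.2 p hp
          simp; tauto)
      exact ⟨L, hL, fun s T => (mem_merge hd hc s T).trans (h s T)⟩
    · have hb : b.toNat = 1 := by have := b.toNat_le; omega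
      obtain ⟨L, hL, h⟩ := ih {x} (V \ B) 1 (by simpa using ⟨hwV.1, hwB.1⟩) one_pos
        (by simp) hw.2 (fun p hp => mem_sdiff.2 ⟨hwV.2 p hp, hwB.2 p hp⟩)
        (fun p hp => by simpa using hw.1 p hp)
      refine ⟨(B, r) :: L, ⟨hB, hr, by omega, hL⟩, fun s T => ?_⟩
      rw [← hb] at h
      exact and_congr_right fun _ => h _ T

/-- `F` is the face predicate (in terms of the slack and the set) of some word listing every element
of `V` exactly once. -/
def Rep (V : Finset α) (F : ℕ → Finset α → Prop) : Prop :=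
  ∃ w : List (α × Bool), (w.map Prod.fst).Nodup ∧ (∀ x, x ∈ w.map Prod.fst ↔ x ∈ V) ∧
    ∀ s T, F s T ↔ Mem (word w) s T

lemma Rep.cons {V : Finset α} {F : ℕ → Finset α → Prop} (h : Rep V F) {x : α} (hx : x ∉ V)
    (b : Bool) : Rep (insert x V) fun s T =>
      #(T ∩ {x}) ≤ s + b.toNat ∧ F (s + b.toNat - #(T ∩ {x})) T := by
  obtain ⟨w, h1, h2, h3⟩ := h
  refine ⟨(x, b) :: w, ?_, ?_, ?_⟩
  · rw [List.map_cons, List.nodup_cons, h2]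
    exact ⟨hx, h1⟩
  · intro y
    rw [List.map_cons, List.mem_cons, h2, mem_insert]
  · intro s T
    simp only [h3]
    rfl

lemma Rep.congr {V : Finset α} {F F' : ℕ → Finset α → Prop} (h : Rep V F)
    (hF : ∀ s T, F' s T ↔ F s T) : Rep V F' := by
  obtain ⟨w, h1, h2, h3⟩ := h
  exact ⟨w, h1, h2, fun s T => (hF s T).trans (h3 s T)⟩

lemma card_inter_insert {A T : Finset α} {x : α} (hx : x ∉ A) :
    #(T ∩ insert x A) = #(T ∩ {x}) + #(T ∩ A) := by
  rw [← card_union_of_disjoint, ← inter_union_distrib_left, insert_eq]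
  exact (disjoint_singleton_left.2 hx).mono inter_subset_right inter_subset_right

lemma Rep.ones {V : Finset α} {F : ℕ → Finset α → Prop} (h : Rep V F) (A : Finset α)
    (hA : Disjoint A V) : Rep (A ∪ V) fun s T => F (s + #A - #(T ∩ A)) T := by
  induction A using Finset.induction_on with
  | empty => simpa using h
  | insert x A hx ih =>
    rw [disjoint_insert_left] at hA
    rw [insert_union]
    refine ((ih hA.2).cons (x := x) (by simp [hx, hA.1]) true).congr fun s T => ?_
    have h1 : #(T ∩ {x}) ≤ #{x} := card_le_card inter_subset_right
    rw [card_singleton] at h1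
    rw [card_inter_insert hx, card_insert_of_notMem hx, Bool.toNat_true]
    rw [show s + 1 - #(T ∩ {x}) + #A - #(T ∩ A) = s + (#A + 1) - (#(T ∩ {x}) + #(T ∩ A)) by
      omega]
    exact ⟨fun h => ⟨by omega, h⟩, fun h => h.2⟩

lemma Rep.zeros {V : Finset α} {F : ℕ → Finset α → Prop} (h : Rep V F) (A : Finset α)
    (hA : Disjoint A V) : Rep (A ∪ V) fun s T => #(T ∩ A) ≤ s ∧ F (s - #(T ∩ A)) T := by
  induction A using Finset.induction_on with
  | empty => simpa using h
  | insert x A hx ih =>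
    rw [disjoint_insert_left] at hA
    rw [insert_union]
    refine ((ih hA.2).cons (x := x) (by simp [hx, hA.1]) false).congr fun s T => ?_
    rw [card_inter_insert hx, Bool.toNat_false, add_zero, ← and_assoc, ← Nat.sub_sub]
    exact and_congr_left fun _ => by omega

/-- Every normalised code comes from a word: a block `(B, r)` is spelled as `r` ones followed by
`#B - r` zeros, and the unconstrained elements are spelled as ones at the end. -/
lemma rep_mem {L : List (Finset α × ℕ)} {V : Finset α} (hL : Good L V) : Rep V (Mem L) := by
  induction L generalizing V with
  | nil =>
    have h : Rep (∅ : Finset α) fun _ _ => True := ⟨[], by simp, by simp, fun s T => Iff.rfl⟩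
    simpa using (h.ones V (by simp)).congr (F' := Mem []) fun s T => Iff.rfl
  | cons p L ih =>
    obtain ⟨B, r⟩ := p
    obtain ⟨hB, -, hrB, hL⟩ := hL
    obtain ⟨A, hA, rfl⟩ := exists_subset_card_eq (s := B) (n := r) hrB.le
    have h := ((ih hL).zeros (B \ A) (disjoint_sdiff.mono_left sdiff_subset)).ones A
      (by
        rw [disjoint_union_right]
        exact ⟨disjoint_sdiff, disjoint_sdiff.mono_left hA⟩)
    rw [← union_assoc, union_sdiff_of_subset hA, union_sdiff_of_subset hB] at h
    refine h.congr fun s T => ?_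
    have h1 : #(T ∩ B) = #(T ∩ A) + #(T ∩ (B \ A)) := by
      rw [← card_union_of_disjoint, ← inter_union_distrib_left, union_sdiff_of_subset hA]
      exact disjoint_sdiff.mono inter_subset_right inter_subset_right
    have h2 : #(T ∩ A) ≤ #A := card_le_card inter_subset_right
    simp only [Mem]
    rw [h1, ← Nat.sub_sub]
    exact and_congr_left fun _ => by omega

end Codes

/-! ### Gale order ideals as codes -/

section Gale

variable {n : ℕ}

/-- Unfolding of `Mem` for words whose positions are read in decreasing order. -/
lemma mem_word_iff (σ : Equiv.Perm (Fin n)) (S T : Finset (Fin n)) (l : List (Fin n))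
    (hl : l.Pairwise (· > ·)) (s : ℕ) :
    Mem (word (l.map fun i => (σ i, decide (i ∈ S)))) s T ↔ ∀ c ∈ l,
      #{x ∈ l.toFinset | c ≤ x ∧ σ x ∈ T} ≤ s + #{x ∈ l.toFinset | c ≤ x ∧ x ∈ S} := by
  induction l generalizing s with
  | nil => simp [word, Mem]
  | cons a l ih =>
    rw [List.pairwise_cons] at hl
    have ha : a ∉ l.toFinset := fun h => lt_irrefl _ (hl.1 a (List.mem_toFinset.1 h))
    have key : ∀ (P : Fin n → Prop) [DecidablePred P], ∀ c ∈ l,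
        #{x ∈ (a :: l).toFinset | c ≤ x ∧ P x} =
          (if P a then 1 else 0) + #{x ∈ l.toFinset | c ≤ x ∧ P x} := by
      intro P _ c hc
      rw [List.toFinset_cons, filter_insert]
      have hca : c ≤ a := (hl.1 c hc).le
      by_cases h : P a
      · rw [if_pos ⟨hca, h⟩, if_pos h, card_insert_of_notMem (fun h => ha (mem_filter.1 h).1),
          add_comm]
      · rw [if_neg (fun h' => h h'.2), if_neg h, zero_add]
    have key' : ∀ (P : Fin n → Prop) [DecidablePred P],
        #{x ∈ (a :: l).toFinset | a ≤ x ∧ P x} = if P a then 1 else 0 := by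
      intro P _
      rw [List.toFinset_cons, filter_insert]
      have : {x ∈ l.toFinset | a ≤ x ∧ P x} = ∅ := by
        rw [filter_eq_empty_iff]
        intro x hx h
        exact absurd h.1 (not_le.2 (hl.1 x (List.mem_toFinset.1 hx)))
      rw [this]
      by_cases h : P a <;> simp [h]
    have h1 : #(T ∩ {σ a}) = if σ a ∈ T then 1 else 0 := by
      by_cases h : σ a ∈ T <;> simp [h]
    have h2 : (decide (a ∈ S)).toNat = if a ∈ S then 1 else 0 := by
      by_cases h : a ∈ S <;> simp [h]
    have h3 : word ((a :: l).map fun i => (σ i, decide (i ∈ S))) =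
      ({σ a}, (decide (a ∈ S)).toNat) :: word (l.map fun i => (σ i, decide (i ∈ S))) := rfl
    rw [h3, Mem, ih hl.2, List.forall_mem_cons, key' (fun x => σ x ∈ T), key' (fun x => x ∈ S),
      h1, h2]
    refine and_congr_right fun h4 => forall₂_congr fun c hc => ?_
    rw [key (fun x => σ x ∈ T) c hc, key (fun x => x ∈ S) c hc]
    omega

/-- The word reading `σ (n-1), …, σ 0`, with each `σ i` marked by whether `i ∈ S`. -/
def permWord (σ : Equiv.Perm (Fin n)) (S : Finset (Fin n)) : List (Fin n × Bool) :=
  (List.finRange n).reverse.map fun i => (σ i, decide (i ∈ S))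

lemma galeB_iff (σ : Equiv.Perm (Fin n)) (S U : Finset (Fin n)) :
    galeB (U.image σ.symm) S ↔ Mem (word (permWord σ S)) 0 U := by
  rw [permWord, mem_word_iff]
  · have hu : (List.finRange n).reverse.toFinset = univ := by ext; simp
    simp only [List.mem_reverse, List.mem_finRange, forall_true_left, zero_add, hu, galeB]
    refine forall_congr' fun c => ?_
    rw [show {x ∈ U.image σ.symm | c ≤ x} = ({x | c ≤ x ∧ σ x ∈ U} : Finset (Fin n)) by
      ext x
      simp only [mem_filter, mem_image, mem_univ, true_and, and_comm (a := c ≤ x)]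
      refine and_congr_left fun _ => ⟨?_, fun h => ⟨_, h, by simp⟩⟩
      rintro ⟨a, ha, rfl⟩
      simpa using ha]
    rw [show {x ∈ S | c ≤ x} = ({x | c ≤ x ∧ x ∈ S} : Finset (Fin n)) by
      ext x; simp [and_comm]]
  · rw [List.pairwise_reverse]
    exact (List.sortedLT_finRange n).pairwise

lemma schubert_eq (S N : Finset (Fin n)) (σ : Equiv.Perm (Fin n)) :
    (fun T : Finset (Fin n) => ((T \ N) ∪ (N \ T)).image σ) '' {T | galeB T S} =
      fam (word (permWord σ S)) (N.image σ) := by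
  ext U
  simp only [fam, Set.mem_image, Set.mem_ofPred_eq]
  rw [← galeB_iff]
  constructor
  · rintro ⟨T, hT, rfl⟩
    convert hT
    ext x
    simp only [mem_image, mem_symmDiff, mem_union, mem_sdiff, Equiv.symm_apply_eq,
      exists_eq_right, EmbeddingLike.apply_eq_iff_eq]
    tauto
  · intro h
    refine ⟨_, h, ?_⟩
    ext x
    obtain ⟨y, rfl⟩ := σ.surjective x
    simp only [mem_image, mem_symmDiff, mem_union, mem_sdiff, Equiv.symm_apply_eq,
      exists_eq_right, EmbeddingLike.apply_eq_iff_eq]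
    tauto

lemma exists_permWord (w : List (Fin n × Bool)) (hw : (w.map Prod.fst).Nodup)
    (hw' : ∀ x, x ∈ w.map Prod.fst) : ∃ σ S, permWord σ S = w := by
  have hlen : w.length = n := by
    have h := List.toFinset_card_of_nodup hw
    rw [show (w.map Prod.fst).toFinset = univ by
      ext x; simpa only [List.mem_toFinset, mem_univ, iff_true] using hw' x] at h
    simpa using h.symm
  have hr : w.reverse.length = n := by simpa using hlen
  have hinj : Function.Injective fun i : Fin n => (w.reverse[i.1]'(by omega)).1 := by
    intro i j hij
    have h1 : (w.reverse.map Prod.fst).Nodup := by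
      rw [List.map_reverse]; exact List.nodup_reverse.2 hw
    have := (h1.getElem_inj_iff (i := i.1) (j := j.1) (hi := by simp; omega)
      (hj := by simp; omega)).1 (by simpa using hij)
    exact Fin.ext this
  refine ⟨Equiv.ofBijective _ (Finite.injective_iff_bijective.1 hinj),
    ({i : Fin n | (w.reverse[i.1]'(by omega)).2 = true} : Finset (Fin n)), ?_⟩
  rw [permWord, List.map_reverse, List.reverse_eq_iff]
  refine List.ext_getElem (by simp [hlen]) fun i h1 h2 => ?_
  simp

lemma fam_inter_supp (L : List (Finset (Fin n) × ℕ)) (N : Finset (Fin n)) :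
    fam L N = fam L (N ∩ supp L) := by
  ext U
  refine mem_congr fun x hx => ?_
  simp only [mem_symmDiff, mem_inter]
  tauto

/-- The loopless and coloopless Schubert families are exactly the twisted complexes of normalised
codes. Looplessness and colooplessness together force the top element of `[n]` into `S`, which
is what the normal form of the word needs. -/
lemma families_eq (hn : 1 ≤ n) (ℱ : Set (Finset (Fin n))) :
    (IsSchubertDeltaFamily ℱ ∧ FamLoopless ℱ ∧ FamColoopless ℱ) ↔
      ∃ L N, Good L (univ : Finset (Fin n)) ∧ N ⊆ supp L ∧ fam L N = ℱ := by
  constructor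
  · rintro ⟨⟨S, σ, N, rfl⟩, h1, h2⟩
    rw [schubert_eq] at *
    obtain ⟨m, rfl⟩ : ∃ m, n = m + 1 := ⟨n - 1, by omega⟩
    set t := Fin.last m
    have hword : permWord σ S =
        (σ t, decide (t ∈ S)) :: ((List.finRange m).map Fin.castSucc).reverse.map
          fun i => (σ i, decide (i ∈ S)) := by
      rw [permWord, List.finRange_succ_last]
      simp [t]
    -- One of the two hypotheses yields a member whose untwisted form contains `σ t`.
    have ht : t ∈ S := by
      have key : ∃ U ∈ fam (word (permWord σ S)) (N.image σ), σ t ∈ symmDiff U (N.image σ) := by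
        by_cases hN : σ t ∈ N.image σ
        · obtain ⟨U, hU, h⟩ := h2 (σ t)
          exact ⟨U, hU, mem_symmDiff.2 (Or.inr ⟨hN, h⟩)⟩
        · obtain ⟨U, hU, h⟩ := h1 (σ t)
          exact ⟨U, hU, mem_symmDiff.2 (Or.inl ⟨h, hN⟩)⟩
      obtain ⟨U, hU, h⟩ := key
      rw [fam, Set.mem_ofPred_eq, hword] at hU
      have h3 := hU.1
      by_contra hS
      simp [h, hS] at h3
    have hnd : ((permWord σ S).map Prod.fst).Nodup := by
      have : (permWord σ S).map Prod.fst = (List.finRange (m + 1)).reverse.map σ := by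
        simp [permWord]
      rw [this]
      exact (List.nodup_reverse.2 (List.nodup_finRange _)).map σ.injective
    rw [hword, List.map_cons, List.nodup_cons] at hnd
    obtain ⟨L, hL, h⟩ := exists_code _ {σ t} univ 1 (subset_univ _) one_pos (by simp)
      hnd.2 (fun p _ => mem_univ _) (fun p hp h => hnd.1 (by
        rw [mem_singleton] at h
        have := List.mem_map_of_mem (f := Prod.fst) hp
        rwa [h] at this))
    refine ⟨L, N.image σ ∩ supp L, hL, inter_subset_right, ?_⟩
    rw [← fam_inter_supp]
    ext U
    simp only [fam, Set.mem_ofPred_eq]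
    rw [← h, hword]
    simp [word, ht]
  · rintro ⟨L, N, hL, hN, rfl⟩
    have hmem : ∀ T : Finset (Fin n), #T ≤ 1 → symmDiff T N ∈ fam L N := fun T hT => by
      rw [fam, Set.mem_ofPred_eq, symmDiff_symmDiff_cancel_right]
      exact mem_of_card_le hL (by simpa using hT)
    refine ⟨?_, fun i => ?_, fun i => ?_⟩
    · obtain ⟨w, h1, h2, h3⟩ := rep_mem hL
      obtain ⟨σ, S, rfl⟩ := exists_permWord w h1 fun x => (h2 x).2 (mem_univ _)
      refine ⟨S, σ, N.image σ.symm, ?_⟩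
      rw [schubert_eq, image_image]
      ext U
      simp [fam, h3]
    · by_cases hi : i ∈ N
      · exact ⟨_, hmem ∅ (by simp), by simpa [mem_symmDiff] using hi⟩
      · exact ⟨_, hmem {i} (by simp), by simpa [mem_symmDiff] using hi⟩
    · by_cases hi : i ∈ N
      · exact ⟨_, hmem {i} (by simp), by simpa [mem_symmDiff] using hi⟩
      · exact ⟨_, hmem ∅ (by simp), by simpa [mem_symmDiff] using hi⟩

end Gale

/-! ### Counting codes -/

section Count

variable {α : Type*} [DecidableEq α]

/-- The finset of normalised codes on `V`; the first argument is a recursion bound, which has to be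
at least `#V`. -/
def codes : ℕ → Finset α → Finset (List (Finset α × ℕ))
  | 0, _ => {[]}
  | k + 1, V => insert [] <| V.powerset.biUnion fun B =>
      (Ioo 0 #B).biUnion fun r => (codes k (V \ B)).image (List.cons (B, r))

lemma mem_codes {k : ℕ} {V : Finset α} (hV : #V ≤ k) (L : List (Finset α × ℕ)) :
    L ∈ codes k V ↔ Good L V := by
  induction k generalizing V L with
  | zero =>
    obtain rfl : V = ∅ := card_eq_zero.1 (by omega)
    cases L with
    | nil => simp [codes, Good]
    | cons p L =>
      obtain ⟨B, r⟩ := p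
      simp only [codes, mem_singleton, reduceCtorEq, Good, subset_empty, false_iff]
      rintro ⟨rfl, h1, h2, -⟩
      simp at h2
  | succ k ih =>
    cases L with
    | nil => simp [codes, Good]
    | cons p L =>
      obtain ⟨B, r⟩ := p
      simp only [codes, mem_insert, reduceCtorEq, mem_biUnion, mem_powerset, mem_Ioo, mem_image,
        List.cons.injEq, Prod.mk.injEq, false_or, Good]
      have h : B ⊆ V → r < #B → (L ∈ codes k (V \ B) ↔ Good L (V \ B)) := fun hB hr => ih
        (by have := card_sdiff_add_card_eq_card hB; omega) L
      constructor
      · rintro ⟨B', hB, r', ⟨h0, hr⟩, L', hL, ⟨rfl, rfl⟩, rfl⟩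
        exact ⟨hB, h0, hr, (h hB hr).1 hL⟩
      · rintro ⟨hB, h0, hr, hL⟩
        exact ⟨B, hB, r, ⟨h0, hr⟩, L, (h hB hr).2 hL, ⟨rfl, rfl⟩, rfl⟩

/-- The number of pairs of a normalised code and a subset of its support satisfies, by splitting off
the first block, the recursion assumed for `d`. The truncated `j - 1` counts the `r` with
`0 < r < j`, also for `j = 0`. -/
lemma sum_codes {d : ℕ → ℕ} (hd : ∀ m, d m = 1 + ∑ j ∈ range (m + 1),
      m.choose j * ((j - 1) * (2 ^ j * d (m - j)))) {k : ℕ} {V : Finset α} (hV : #V ≤ k) :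
    ∑ L ∈ codes k V, 2 ^ #(supp L) = d #V := by
  induction k generalizing V with
  | zero =>
    have h0 : #V = 0 := by omega
    rw [h0, hd]
    simp [codes, supp]
  | succ k ih =>
    rw [codes, sum_insert (by simp), hd, sum_biUnion, supp, card_empty, pow_zero]
    · have key : ∀ B ∈ V.powerset, ∑ L ∈ (Ioo 0 #B).biUnion (fun r =>
          (codes k (V \ B)).image (List.cons (B, r))), 2 ^ #(supp L) =
          (#B - 1) * (2 ^ #B * d (#V - #B)) := by
        intro B hB
        rw [mem_powerset] at hB
        rw [sum_biUnion]
        · rw [sum_congr rfl (g := fun _ => 2 ^ #B * d (#V - #B)), sum_const, Nat.card_Ioo]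
          · simp
          · intro r hr
            rw [mem_Ioo] at hr
            have hk : #(V \ B) ≤ k := by
              have := card_sdiff_add_card_eq_card hB; omega
            rw [sum_image (by simp), ← card_sdiff_of_subset hB, ← ih hk, mul_sum]
            refine sum_congr rfl fun L hL => ?_
            rw [supp, card_union_of_disjoint, pow_add]
            exact disjoint_sdiff.mono_right (supp_subset ((mem_codes hk L).1 hL))
        · intro r _ r' _ hrr
          rw [Function.onFun, disjoint_left]
          intro L h1 h2
          simp only [mem_image] at h1 h2
          obtain ⟨L1, -, rfl⟩ := h1
          obtain ⟨L2, -, h⟩ := h2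
          rw [List.cons.injEq, Prod.mk.injEq] at h
          exact hrr h.1.2.symm
      rw [sum_congr rfl key, sum_powerset_apply_card
        (fun j => (j - 1) * (2 ^ j * d (#V - j)))]
      simp
    · intro B _ B' _ hBB
      rw [Function.onFun, disjoint_left]
      intro L h1 h2
      simp only [mem_image, mem_biUnion] at h1 h2
      obtain ⟨r, -, L1, -, rfl⟩ := h1
      obtain ⟨r', -, L2, -, h⟩ := h2
      rw [List.cons.injEq, Prod.mk.injEq] at h
      exact hBB h.1.1.symm

lemma ncard_families {n : ℕ} (hn : 1 ≤ n) {d : ℕ → ℕ}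
    (hd : ∀ m, d m = 1 + ∑ j ∈ range (m + 1), m.choose j * ((j - 1) * (2 ^ j * d (m - j)))) :
    {ℱ : Set (Finset (Fin n)) |
      IsSchubertDeltaFamily ℱ ∧ FamLoopless ℱ ∧ FamColoopless ℱ}.ncard = d n := by
  have h : {ℱ : Set (Finset (Fin n)) |
      IsSchubertDeltaFamily ℱ ∧ FamLoopless ℱ ∧ FamColoopless ℱ} =
      (fun p : (_ : List (Finset (Fin n) × ℕ)) × Finset (Fin n) => fam p.1 p.2) ''
        (((codes n univ).sigma fun L => (supp L).powerset :
          Finset ((_ : List (Finset (Fin n) × ℕ)) × Finset (Fin n))) : Set _) := by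
    ext ℱ
    rw [Set.mem_ofPred_eq, families_eq hn]
    simp only [Set.mem_image, mem_coe, mem_sigma, mem_powerset, Sigma.exists,
      mem_codes (V := (univ : Finset (Fin n))) (k := n) (by simp), and_assoc]
  rw [h, Set.InjOn.ncard_image, Set.ncard_coe_finset, card_sigma]
  · simp only [card_powerset]
    rw [sum_codes hd (by simp)]
    simp
  · rintro ⟨L, N⟩ h1 ⟨L', N'⟩ h2 hf
    simp only [mem_coe, mem_sigma, mem_powerset,
      mem_codes (V := (univ : Finset (Fin n))) (k := n) (by simp)] at h1 h2
    obtain ⟨rfl, rfl⟩ := fam_injective h1.1 h2.1 h1.2 h2.2 hf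
    rfl

end Count

/-! ### Counting signed derangements -/

section Derangements

/-- The number of signed derangements of `[n]`. -/
noncomputable def sd (n : ℕ) : ℕ :=
  {p : Equiv.Perm (Fin n) × Finset (Fin n) | ∀ i : Fin n, p.1 i = i → i ∈ p.2}.ncard

lemma card_fix {n : ℕ} (t : Finset (Fin n)) :
    #{p : Equiv.Perm (Fin n) × Finset (Fin n) | ∀ i ∈ t, p.1 i = i ∧ i ∉ p.2} =
      (n - #t).factorial * 2 ^ (n - #t) := by
  have h : ({p : Equiv.Perm (Fin n) × Finset (Fin n) | ∀ i ∈ t, p.1 i = i ∧ i ∉ p.2} :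
      Finset _) = ({σ : Equiv.Perm (Fin n) | ∀ i ∈ t, σ i = i} : Finset _) ×ˢ tᶜ.powerset := by
    ext p
    simp only [mem_filter, mem_univ, true_and, mem_product, mem_powerset, subset_iff, mem_compl]
    constructor
    · exact fun h => ⟨fun i hi => (h i hi).1, fun i hi hit => (h i hit).2 hi⟩
    · exact fun h i hi => ⟨h.1 i hi, fun h' => h.2 h' hi⟩
  have h2 : #{σ : Equiv.Perm (Fin n) | ∀ i ∈ t, σ i = i} = (n - #t).factorial := by
    have e := Fintype.card_congr (Equiv.Perm.subtypeEquivSubtypePerm fun i : Fin n => i ∉ t)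
    rw [Fintype.card_perm, Fintype.card_subtype_compl, Fintype.card_fin, Fintype.card_coe,
      Fintype.card_subtype] at e
    simpa using e.symm
  rw [h, card_product, h2, card_powerset, card_compl, Fintype.card_fin]

/-- Inclusion-exclusion over the set of unflipped fixed points. -/
lemma sd_eq (n : ℕ) : (sd n : ℤ) = ∑ k ∈ range (n + 1),
    (n.choose k : ℤ) * ((-1) ^ k * (((n - k).factorial : ℤ) * 2 ^ (n - k))) := by
  classical
  let S : Fin n → Finset (Equiv.Perm (Fin n) × Finset (Fin n)) := fun i =>
    {p | p.1 i = i ∧ i ∉ p.2}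
  have h : {p : Equiv.Perm (Fin n) × Finset (Fin n) | ∀ i : Fin n, p.1 i = i → i ∈ p.2} =
      ((univ.inf fun i => (S i)ᶜ : Finset _) : Set _) := by
    ext p
    simp [S, mem_inf]
  have h2 : ∀ t : Finset (Fin n), #(t.inf S) = (n - #t).factorial * 2 ^ (n - #t) := fun t => by
    rw [← card_fix]
    congr 1
    ext p
    simp [S, mem_inf]
  rw [sd, h, Set.ncard_coe_finset, inclusion_exclusion_card_inf_compl]
  simp only [h2]
  push_cast
  rw [sum_powerset_apply_card (fun k => (-1 : ℤ) ^ k * (((n - k).factorial : ℤ) * 2 ^ (n - k)))]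
  simp

lemma sd_zero : sd 0 = 1 := by
  have := sd_eq 0
  simpa using this

lemma sd_succ (n : ℕ) : (sd (n + 1) : ℤ) = 2 * (n + 1) * sd n + (-1) ^ (n + 1) := by
  rw [sd_eq, sd_eq, sum_range_succ, mul_sum]
  congr 1
  · refine sum_congr rfl fun k hk => ?_
    have hk : k ≤ n := by simpa [Nat.lt_succ_iff] using hk
    have h1 : n + 1 - k = n - k + 1 := by omega
    have h2 : ((n + 1).choose k : ℤ) * ((n - k : ℕ) + 1) = (n + 1) * n.choose k := by
      have := Nat.choose_mul_succ_eq n k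
      rw [h1] at this
      zify at this
      linarith
    rw [h1, Nat.factorial_succ, pow_succ]
    push_cast
    linear_combination ((-1) ^ k * ((n - k).factorial : ℤ) * 2 ^ (n - k) * 2) * h2
  · simp

open PowerSeries in
/-- The exponential generating function `D` of `sd` satisfies `(1 - 2X) D = exp (-X)`, whence
`exp (2X) (1 - 2X) D = exp X`. The coefficient of `exp (2X) (1 - 2X)` at `j` is
`2 ^ j (1 - j) / j!`, so comparing coefficients gives the recursion. -/
lemma sd_rec (m : ℕ) : sd m = 1 + ∑ j ∈ range (m + 1),
    m.choose j * ((j - 1) * (2 ^ j * sd (m - j))) := by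
  let D : ℚ⟦X⟧ := PowerSeries.mk fun n => (sd n : ℚ) / n.factorial
  have h1 : (1 - 2 * (X : ℚ⟦X⟧)) * D = rescale (-1) (exp ℚ) := by
    ext n
    rw [sub_mul, one_mul, mul_assoc, map_sub, show (2 : ℚ⟦X⟧) = C 2 from rfl, coeff_C_mul]
    cases n with
    | zero => simp [D, sd_zero]
    | succ n =>
      have := congrArg (Int.cast : ℤ → ℚ) (sd_succ n)
      push_cast at this
      rw [coeff_succ_X_mul, coeff_rescale, coeff_exp]
      simp only [D, coeff_mk, this, Nat.factorial_succ]
      push_cast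
      have : (n.factorial : ℚ) ≠ 0 := by positivity
      have : (n + 1 : ℚ) ≠ 0 := by positivity
      simp
      field_simp
      ring
  have h2 : (rescale 2 (exp ℚ) * (1 - 2 * X)) * D = exp ℚ := by
    rw [mul_assoc, h1, exp_mul_exp_eq_exp_add]
    norm_num
  have h3 : ∀ j, coeff j (rescale 2 (exp ℚ) * (1 - 2 * X)) =
      (2 : ℚ) ^ j * (1 - j) / j.factorial := by
    intro j
    rw [mul_sub, mul_one, mul_left_comm, map_sub, show (2 : ℚ⟦X⟧) = C 2 from rfl, coeff_C_mul]
    cases j with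
    | zero => simp
    | succ j =>
      rw [coeff_succ_mul_X, coeff_rescale, coeff_rescale, coeff_exp, coeff_exp]
      have : (j.factorial : ℚ) ≠ 0 := by positivity
      have : (j + 1 : ℚ) ≠ 0 := by positivity
      simp [Nat.factorial_succ]
      field_simp
      ring
  have h4 := congrArg (coeff m) h2
  rw [coeff_mul, Nat.sum_antidiagonal_eq_sum_range_succ_mk, coeff_exp] at h4
  simp only [h3, D, coeff_mk] at h4
  have h5 : ∑ j ∈ range (m + 1), (m.choose j : ℚ) * ((1 - j) * (2 ^ j * sd (m - j))) = 1 := by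
    have hm : (m.factorial : ℚ) ≠ 0 := by positivity
    calc _ = ∑ j ∈ range (m + 1), (m.factorial : ℚ) *
          (2 ^ j * (1 - j) / j.factorial * (sd (m - j) / (m - j).factorial)) := by
          refine sum_congr rfl fun j hj => ?_
          have hj : j ≤ m := by simpa [Nat.lt_succ_iff] using hj
          rw [Nat.cast_choose ℚ hj]
          field_simp
      _ = 1 := by
          rw [← mul_sum, h4]
          simp [hm]
  rw [sum_range_succ'] at h5 ⊢
  have h6 : ∑ k ∈ range m, (m.choose (k + 1) : ℚ) *
      ((1 - (k + 1 : ℕ)) * (2 ^ (k + 1) * sd (m - (k + 1)))) =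
      -((∑ k ∈ range m, m.choose (k + 1) * ((k + 1 - 1) * (2 ^ (k + 1) * sd (m - (k + 1)))) : ℕ)
        : ℚ) := by
    push_cast
    rw [← sum_neg_distrib]
    refine sum_congr rfl fun k _ => ?_
    simp
  rw [h6] at h5
  have h7 : ((sd m : ℕ) : ℚ) = ((1 + ∑ k ∈ range m,
      m.choose (k + 1) * ((k + 1 - 1) * (2 ^ (k + 1) * sd (m - (k + 1)))) : ℕ) : ℚ) := by
    rw [Nat.cast_add, Nat.cast_one]
    simp only [Nat.choose_zero_right, Nat.cast_one, Nat.cast_zero, sub_zero, pow_zero, one_mul,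
      Nat.sub_zero]
      at h5
    linarith
  simpa using Nat.cast_injective h7

end Derangements

end SchubertDelta

/-- The number of feasible families of loopless and coloopless Schubert delta matroids
on `[n]` equals the number of signed derangements of `[n]`, i.e. the number of pairs
`(σ, N)` of a permutation `σ` and a set `N` of sign-flipped indices such that every
fixed point of `σ` lies in `N`. -/
theorem card_loopless_coloopless_schubert_delta_eq_signed_derangements
    (n : ℕ) (hn : 1 ≤ n) :
    {ℱ : Set (Finset (Fin n)) |
        IsSchubertDeltaFamily ℱ ∧ FamLoopless ℱ ∧ FamColoopless ℱ}.ncard =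
      {p : Equiv.Perm (Fin n) × Finset (Fin n) |
        ∀ i : Fin n, p.1 i = i → i ∈ p.2}.ncard := by
  exact SchubertDelta.ncard_families hn SchubertDelta.sd_rec
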